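/- Let n ≥ 1 and ν > 0. Suppose f : ℍⁿ → ℝ is continuous, positive, attains its maximum at the origin, the limit α := lim_{|ζ|_H→∞} |ζ|_H^ν f(ζ) exists and is positive, β := α^{2/ν} f(0)^{−2/ν}, and for every ξ ∈ ℍⁿ there exists λ(ξ) > 0 such that (λ(ξ)/d_H(ξ,ζ))^ν · f(Φ_{ξ,λ(ξ)}^β(ζ)) = f(ζ) for all ζ ∈ ℍⁿ ∖ {ξ}. Then for any ε > 0 there exists C_ε > 0 such that for every ζ ∈ ℍⁿ with |ζ|_H ≥ C_ε, there exists a point ξ* ∈ ℍⁿ with Φ_{ξ*,λ(ξ*)}^β(ζ) = 0 and |ξ*|_H ≤ ε. -/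

import Mathlib

open Complex Filter Topology MeasureTheory

noncomputable section

/-- The Heisenberg group ℍⁿ as ℂⁿ × ℝ. -/
abbrev Heis (n : ℕ) := (Fin n → ℂ) × ℝ

namespace Heis

variable {n : ℕ}

/-- Hermitian inner product ⟨z,z'⟩ = Σ_j z_j conj(z'_j). -/
def hermInner (z w : Fin n → ℂ) : ℂ := ∑ j, z j * (starRingEnd ℂ) (w j)

/-- Squared Euclidean norm |z|² = Σ_j |z_j|². -/
def nsq (z : Fin n → ℂ) : ℝ := ∑ j, Complex.normSq (z j)

/-- Group law (z,t)·(z',t') = (z+z', t+t'+2 Im⟨z,z'⟩). -/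
def hmul (a b : Heis n) : Heis n :=
  (a.1 + b.1, a.2 + b.2 + 2 * (hermInner a.1 b.1).im)

/-- Group inverse: ζ⁻¹ = −ζ. -/
def hinv (a : Heis n) : Heis n := (-a.1, -a.2)

/-- Korányi norm |(z,t)|_H = (|z|⁴ + t²)^{1/4}. -/
def korNorm (a : Heis n) : ℝ := ((nsq a.1) ^ 2 + a.2 ^ 2) ^ ((1 : ℝ)/4)

/-- Korányi distance d_H(ξ,ζ) = |ζ⁻¹·ξ|_H. -/
def dH (a b : Heis n) : ℝ := korNorm (hmul (hinv b) a)

/-- Open Korányi ball B_λ(ξ). -/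
def ball (ξ : Heis n) (lam : ℝ) : Set (Heis n) := {ζ | dH ξ ζ < lam}

/-- Left translation τ_ξ. -/
def tau (ξ ζ : Heis n) : Heis n := hmul ξ ζ

/-- Dilation δ_λ(z,t) = (λz, λ²t). -/
def dil (lam : ℝ) (a : Heis n) : Heis n := (fun j => (lam : ℂ) * a.1 j, lam ^ 2 * a.2)

/-- Rotation ρ_M(z,t) = (Mz,t). -/
def rot (M : Matrix (Fin n) (Fin n) ℂ) (a : Heis n) : Heis n := (M.mulVec a.1, a.2)

/-- Inversion ι(z,t) = (conj z, −t). -/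
def iota (a : Heis n) : Heis n := (fun j => (starRingEnd ℂ) (a.1 j), -a.2)

/-- w = t + i|z|². -/
def wC (a : Heis n) : ℂ := (a.2 : ℂ) + Complex.I * ((nsq a.1 : ℝ) : ℂ)

/-- CR inversion 𝒥(z,t) = (z/w, −t/|w|²). -/
def crInv (a : Heis n) : Heis n :=
  (fun j => a.1 j / wC a, -a.2 / Complex.normSq (wC a))

/-- Angles θ_k for the rotation matrix M_{ξ,β}. -/
def theta (ξ : Heis n) (β : ℝ) (k : Fin n) : ℝ :=
  if ξ.1 k ≠ 0 then 2 * (ξ.1 k).arg + (wC ξ + Complex.I * (β : ℂ)).arg else 0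

/-- The unitary diagonal matrix M_{ξ,β} = diag(e^{iθ₁},…,e^{iθₙ}). -/
def Mmat (ξ : Heis n) (β : ℝ) : Matrix (Fin n) (Fin n) ℂ :=
  Matrix.diagonal fun k => Complex.exp (Complex.I * ((theta ξ β k : ℝ) : ℂ))

/-- Generalized CR inversion Φ_{ξ,λ}^β = τ_ξ ∘ ρ_{M_{ξ,β}} ∘ δ_{λ²} ∘ 𝒥 ∘ ι ∘ τ_ξ⁻¹. -/
def Phi (ξ : Heis n) (lam β : ℝ) (ζ : Heis n) : Heis n :=
  tau ξ (rot (Mmat ξ β) (dil (lam ^ 2) (crInv (iota (hmul (hinv ξ) ζ)))))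

/-- Direction of the vector field X_j at p. -/
def XVec (j : Fin n) (p : Heis n) : Heis n := (Pi.single j (1 : ℂ), 2 * (p.1 j).im)

/-- Direction of the vector field Y_j at p. -/
def YVec (j : Fin n) (p : Heis n) : Heis n := (Pi.single j Complex.I, -2 * (p.1 j).re)

/-- The vector field X_j acting on functions. -/
def Xop (j : Fin n) (u : Heis n → ℝ) (p : Heis n) : ℝ := fderiv ℝ u p (XVec j p)

/-- The vector field Y_j acting on functions. -/
def Yop (j : Fin n) (u : Heis n → ℝ) (p : Heis n) : ℝ := fderiv ℝ u p (YVec j p)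

/-- Sub-Laplacian Δ_H = Σ_j (X_j² + Y_j²). -/
def subLap (u : Heis n → ℝ) (p : Heis n) : ℝ :=
  ∑ j, (Xop j (Xop j u) p + Yop j (Yop j u) p)

/-- Squared length of the horizontal gradient |∇_H u|² = Σ_j ((X_j u)² + (Y_j u)²). -/
def gradHSq (u : Heis n → ℝ) (p : Heis n) : ℝ :=
  ∑ j, ((Xop j u p) ^ 2 + (Yop j u p) ^ 2)

/-- Generalized Kelvin transform u_{ξ,λ}^β(η) = (λ/d_H(η,ξ))^{Q−2} u(Φ_{ξ,λ}^β(η)), Q−2 = 2n. -/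
def kelvin (u : Heis n → ℝ) (ξ : Heis n) (lam β : ℝ) (η : Heis n) : ℝ :=
  (lam / dH η ξ) ^ (2 * n) * u (Phi ξ lam β η)

/-- The filter |ζ|_H → ∞ on ℍⁿ. -/
def atInftyH (n : ℕ) : Filter (Heis n) := Filter.comap korNorm Filter.atTop

end Heis

open Heis

lemma nsq_nonneg {n : ℕ} (z : Fin n → ℂ) : 0 ≤ nsq z :=
  Finset.sum_nonneg fun _ _ => Complex.normSq_nonneg _

lemma hermInner_self {n : ℕ} (z : Fin n → ℂ) : hermInner z z = ((nsq z : ℝ) : ℂ) := by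
  simp [hermInner, nsq, Complex.mul_conj]

lemma wC_re {n : ℕ} (a : Heis n) : (wC a).re = a.2 := by simp [wC]

lemma wC_im {n : ℕ} (a : Heis n) : (wC a).im = nsq a.1 := by simp [wC]

lemma korNorm_eq {n : ℕ} (a : Heis n) : korNorm a = ‖wC a‖ ^ ((1 : ℝ) / 2) := by
  have h : (nsq a.1) ^ 2 + a.2 ^ 2 = ‖wC a‖ ^ (2 : ℝ) := by
    rw [Real.rpow_two, Complex.sq_norm, Complex.normSq_apply, wC_re, wC_im]; ring
  rw [korNorm, h, ← Real.rpow_mul (norm_nonneg _)]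
  norm_num

lemma nsq_smul {n : ℕ} (q : ℂ) (z : Fin n → ℂ) :
    nsq (fun k => q * z k) = Complex.normSq q * nsq z := by
  simp [nsq, Finset.mul_sum]

lemma nsq_neg_add {n : ℕ} (x z : Fin n → ℂ) :
    nsq (-x + z) = nsq x + nsq z - 2 * (hermInner z x).re := by
  simp only [nsq, hermInner, Complex.re_sum, Finset.mul_sum, ← Finset.sum_add_distrib,
    ← Finset.sum_sub_distrib]
  refine Finset.sum_congr rfl fun k _ => ?_
  simp [Complex.normSq_apply]; ring

lemma wC_translate {n : ℕ} (ξ ζ : Heis n) :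
    wC (hmul (hinv ξ) ζ) = -(starRingEnd ℂ) (wC ξ) + wC ζ - 2 * I * hermInner ζ.1 ξ.1 := by
  have h : (hermInner (-ξ.1) ζ.1).im = (hermInner ζ.1 ξ.1).im := by
    simp only [hermInner, Complex.im_sum]
    refine Finset.sum_congr rfl fun k _ => ?_
    simp; ring
  apply Complex.ext
  · rw [wC_re]; simp [hmul, hinv, wC_re, h]
  · rw [wC_im]; simp [hmul, hinv, wC_im, nsq_neg_add]

/-- the unit complex number in the direction of `w + iβ` -/
def uDir (β : ℝ) (w : ℂ) : ℂ := (w + I * β) / (‖w + I * β‖ : ℂ)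

/-- numerator of the contraction -/
def numN (β : ℝ) (w : ℂ) (μ : ℝ) : ℂ :=
  w ^ 2 - μ * uDir β w * (w - (starRingEnd ℂ) w) - (μ : ℂ) ^ 2

lemma uDir_norm_le (β : ℝ) (w : ℂ) : ‖uDir β w‖ ≤ 1 := by
  rw [uDir, norm_div, Complex.norm_real, norm_norm]
  exact div_self_le_one _

lemma low_bound {β r : ℝ} {w : ℂ} (hβ : 0 < β) (hr : r ≤ β / 2) (hw : ‖w‖ ≤ r) :
    β / 2 ≤ ‖w + I * β‖ := by
  have h := norm_sub_le_norm_add (I * (β : ℂ)) w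
  have h2 : ‖I * (β : ℂ)‖ = β := by simp [abs_of_pos hβ]
  rw [add_comm w]
  linarith

lemma unit_lip {a b : ℂ} (ha : a ≠ 0) (hb : b ≠ 0) :
    ‖a / (‖a‖ : ℂ) - b / (‖b‖ : ℂ)‖ ≤ 2 * ‖a - b‖ / ‖a‖ := by
  have ha' : 0 < ‖a‖ := norm_pos_iff.2 ha
  have hb' : 0 < ‖b‖ := norm_pos_iff.2 hb
  have hac : (‖a‖ : ℂ) ≠ 0 := by exact_mod_cast ha'.ne'
  have hbc : (‖b‖ : ℂ) ≠ 0 := by exact_mod_cast hb'.ne'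
  have h : a / (‖a‖ : ℂ) - b / (‖b‖ : ℂ)
      = ((a - b) + (b / (‖b‖ : ℂ)) * ((‖b‖ - ‖a‖ : ℝ) : ℂ)) / (‖a‖ : ℂ) := by
    push_cast; field_simp; ring
  rw [h, norm_div, Complex.norm_real, norm_norm]
  gcongr
  refine (norm_add_le _ _).trans ?_
  rw [norm_mul, norm_div, Complex.norm_real, norm_norm, div_self hb'.ne', Complex.norm_real,
    Real.norm_eq_abs]
  have := abs_norm_sub_norm_le b a
  rw [norm_sub_rev b a] at this
  linarith

lemma uDir_lip {β r : ℝ} {w v : ℂ} (hβ : 0 < β) (hr : r ≤ β / 2) (hw : ‖w‖ ≤ r)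
    (hv : ‖v‖ ≤ r) : ‖uDir β w - uDir β v‖ ≤ 4 / β * ‖w - v‖ := by
  have h1 := low_bound hβ hr hw
  have h2 := low_bound hβ hr hv
  have h3 := unit_lip (a := w + I * β) (b := v + I * β)
    (norm_pos_iff.1 (by linarith)) (norm_pos_iff.1 (by linarith))
  rw [add_sub_add_right_eq_sub] at h3
  refine h3.trans ?_
  calc 2 * ‖w - v‖ / ‖w + I * β‖ ≤ 2 * ‖w - v‖ / (β / 2) := by gcongr
    _ = _ := by field_simp; ring

lemma norm_sub_conj_le (w : ℂ) : ‖w - (starRingEnd ℂ) w‖ ≤ 2 * ‖w‖ := by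
  have := norm_sub_le w ((starRingEnd ℂ) w)
  rw [Complex.norm_conj] at this
  linarith

lemma numN_le {β r μ : ℝ} {w : ℂ} (hβ : 0 < β) (hr : r ≤ β / 2) (hw : ‖w‖ ≤ r)
    (h0 : 0 ≤ μ) (h1 : μ ≤ 2 * β) : ‖numN β w μ‖ ≤ 7 * β ^ 2 := by
  have a1 : ‖w ^ 2‖ ≤ β ^ 2 / 4 := by
    rw [norm_pow]; nlinarith [norm_nonneg w]
  have a2 : ‖(μ : ℂ) * uDir β w * (w - (starRingEnd ℂ) w)‖ ≤ 2 * β ^ 2 := by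
    rw [norm_mul, norm_mul, Complex.norm_real, Real.norm_of_nonneg h0]
    calc μ * ‖uDir β w‖ * ‖w - (starRingEnd ℂ) w‖ ≤ (2 * β) * 1 * β := by
          gcongr
          · exact uDir_norm_le β w
          · linarith [norm_sub_conj_le w]
      _ = _ := by ring
  have a3 : ‖(μ : ℂ) ^ 2‖ ≤ 4 * β ^ 2 := by
    rw [norm_pow, Complex.norm_real, Real.norm_of_nonneg h0]; nlinarith
  have b1 := norm_sub_le (w ^ 2 - (μ : ℂ) * uDir β w * (w - (starRingEnd ℂ) w)) ((μ : ℂ) ^ 2)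
  have b2 := norm_sub_le (w ^ 2) ((μ : ℂ) * uDir β w * (w - (starRingEnd ℂ) w))
  rw [numN]
  nlinarith

lemma numN_lip {β r μ : ℝ} {w v : ℂ} (hβ : 0 < β) (hr : r ≤ β / 2) (hw : ‖w‖ ≤ r)
    (hv : ‖v‖ ≤ r) (h0 : 0 ≤ μ) (h1 : μ ≤ 2 * β) :
    ‖numN β w μ - numN β v μ‖ ≤ 13 * β * ‖w - v‖ := by
  have e : numN β w μ - numN β v μ = (w + v) * (w - v)
      - μ * (uDir β w * ((w - v) - (starRingEnd ℂ) (w - v))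
        + (uDir β w - uDir β v) * (v - (starRingEnd ℂ) v)) := by
    simp only [numN, map_sub]; ring
  have a1 : ‖(w + v) * (w - v)‖ ≤ β * ‖w - v‖ := by
    rw [norm_mul]; gcongr; linarith [norm_add_le w v]
  have a2 : ‖uDir β w * ((w - v) - (starRingEnd ℂ) (w - v))‖ ≤ 1 * (2 * ‖w - v‖) := by
    rw [norm_mul]
    gcongr
    · exact uDir_norm_le β w
    · exact norm_sub_conj_le _
  have a3 : ‖(uDir β w - uDir β v) * (v - (starRingEnd ℂ) v)‖ ≤ (4 / β * ‖w - v‖) * β := by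
    rw [norm_mul]
    gcongr
    · exact uDir_lip hβ hr hw hv
    · linarith [norm_sub_conj_le v]
  have a3' : (4 / β * ‖w - v‖) * β = 4 * ‖w - v‖ := by field_simp
  rw [a3'] at a3
  have a4 : ‖(μ : ℂ) * (uDir β w * ((w - v) - (starRingEnd ℂ) (w - v))
        + (uDir β w - uDir β v) * (v - (starRingEnd ℂ) v))‖ ≤ (2 * β) * (6 * ‖w - v‖) := by
    rw [norm_mul, Complex.norm_real, Real.norm_of_nonneg h0]
    gcongr
    refine (norm_add_le _ _).trans ?_
    linarith
  rw [e]
  refine (norm_sub_le _ _).trans ?_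
  linarith

lemma numN_lip_mu {β r μ κ : ℝ} {w : ℂ} (hβ : 0 < β) (hr : r ≤ β / 2) (hw : ‖w‖ ≤ r)
    (h0 : 0 ≤ μ) (h1 : μ ≤ 2 * β) (k0 : 0 ≤ κ) (k1 : κ ≤ 2 * β) :
    ‖numN β w μ - numN β w κ‖ ≤ 5 * β * |μ - κ| := by
  have e : numN β w μ - numN β w κ =
      -(((μ - κ : ℝ) : ℂ) * (uDir β w * (w - (starRingEnd ℂ) w) + ((μ + κ : ℝ) : ℂ))) := by
    simp only [numN]; push_cast; ring
  have a2 : ‖uDir β w * (w - (starRingEnd ℂ) w)‖ ≤ 1 * β := by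
    rw [norm_mul]
    gcongr
    · exact uDir_norm_le β w
    · linarith [norm_sub_conj_le w]
  have a3 : ‖((μ + κ : ℝ) : ℂ)‖ ≤ 4 * β := by
    rw [Complex.norm_real, Real.norm_of_nonneg (by linarith)]; linarith
  rw [e, norm_neg, norm_mul, Complex.norm_real, Real.norm_eq_abs, mul_comm]
  gcongr
  refine (norm_add_le _ _).trans ?_
  linarith

lemma exists_fix {β r μ : ℝ} {W : ℂ} (hβ : 0 < β) (hr0 : 0 < r) (hr : r ≤ β / 2)
    (h0 : 0 ≤ μ) (h1 : μ ≤ 2 * β) (hW : 26 * β ≤ ‖W‖) (hW2 : 7 * β ^ 2 / r ≤ ‖W‖) :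
    ∃ w : ℂ, ‖w‖ ≤ r ∧ numN β w μ / W = w := by
  have hWpos : 0 < ‖W‖ := by linarith
  have hmaps : Set.MapsTo (fun w => numN β w μ / W) (Metric.closedBall (0 : ℂ) r)
      (Metric.closedBall (0 : ℂ) r) := by
    intro w hw
    rw [mem_closedBall_zero_iff] at hw ⊢
    rw [norm_div, div_le_iff₀ hWpos]
    rw [div_le_iff₀ hr0] at hW2
    linarith [numN_le hβ hr hw h0 h1]
  have hc : ContractingWith (1 / 2) (hmaps.restrict _ _ _) := by
    refine ⟨by norm_num, LipschitzWith.of_dist_le_mul ?_⟩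
    rintro ⟨x, hx⟩ ⟨y, hy⟩
    rw [mem_closedBall_zero_iff] at hx hy
    simp only [Subtype.dist_eq, Set.MapsTo.val_restrict_apply, dist_eq_norm]
    rw [← sub_div, norm_div, div_le_iff₀ hWpos]
    have := numN_lip hβ hr hx hy h0 h1
    push_cast
    nlinarith [norm_nonneg (x - y)]
  obtain ⟨y, hy, hfix, -⟩ := hc.exists_fixedPoint'
    (Metric.isClosed_closedBall.isComplete) hmaps
    (x := 0) (by simp [hr0.le]) (edist_ne_top _ _)
  exact ⟨y, mem_closedBall_zero_iff.1 hy, hfix⟩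

lemma fix_lip {β r μ κ : ℝ} {W w v : ℂ} (hβ : 0 < β) (hr : r ≤ β / 2)
    (h0 : 0 ≤ μ) (h1 : μ ≤ 2 * β) (k0 : 0 ≤ κ) (k1 : κ ≤ 2 * β) (hW : 26 * β ≤ ‖W‖)
    (hw : ‖w‖ ≤ r) (hv : ‖v‖ ≤ r) (ew : numN β w μ / W = w) (ev : numN β v κ / W = v) :
    ‖w - v‖ ≤ |μ - κ| := by
  have hWpos : 0 < ‖W‖ := by linarith
  have hW0 : W ≠ 0 := norm_pos_iff.1 hWpos
  have e : (w - v) * W = (numN β w μ - numN β v μ) + (numN β v μ - numN β v κ) := by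
    rw [div_eq_iff hW0] at ew ev
    rw [ew, ev]; ring
  have h2 := congrArg norm e
  rw [norm_mul] at h2
  have h3 := norm_add_le (numN β w μ - numN β v μ) (numN β v μ - numN β v κ)
  have h4 := numN_lip hβ hr hw hv h0 h1
  have h5 := numN_lip_mu hβ hr hv h0 h1 k0 k1
  have h6 : 26 * β * ‖w - v‖ ≤ 13 * β * ‖w - v‖ + 5 * β * |μ - κ| := by
    have : 26 * β * ‖w - v‖ ≤ ‖w - v‖ * ‖W‖ := by nlinarith [norm_nonneg (w - v)]
    linarith
  have h7 : β * (13 * ‖w - v‖) ≤ β * (5 * |μ - κ|) := by linarith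
  have h8 := le_of_mul_le_mul_left h7 hβ
  linarith [abs_nonneg (μ - κ), norm_nonneg (w - v)]

/-- candidate point -/
def cand {n : ℕ} (β μ : ℝ) (w : ℂ) (ζ : Heis n) : Heis n :=
  (fun k => (w / (w - μ * uDir β w)) * ζ.1 k, w.re)

lemma unit_mul_conj {v : ℂ} (hv : v ≠ 0) :
    (v / (‖v‖ : ℂ)) * (starRingEnd ℂ) (v / (‖v‖ : ℂ)) = 1 := by
  have hc : (‖v‖ : ℂ) ≠ 0 := by simpa using hv
  rw [map_div₀, Complex.conj_ofReal, div_mul_div_comm, Complex.mul_conj, Complex.normSq_eq_norm_sq]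
  push_cast
  field_simp

lemma normSq_alg {w W u : ℂ} {μ : ℝ} (hu : u * (starRingEnd ℂ) u = 1) (hw : w ≠ 0)
    (hwu : w - μ * u ≠ 0)
    (h : W * w = w ^ 2 - μ * u * (w - (starRingEnd ℂ) w) - (μ : ℂ) ^ 2) :
    Complex.normSq (w / (w - μ * u)) * W.im = w.im := by
  have h1 : W.im * Complex.normSq w = w.im * Complex.normSq (w - μ * u) := by
    have e1 : W * ((Complex.normSq w : ℝ) : ℂ) = (w ^ 2 - μ * u * (w - (starRingEnd ℂ) w)
        - (μ : ℂ) ^ 2) * (starRingEnd ℂ) w := by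
      rw [← Complex.mul_conj, ← h]; ring
    have hu' : u.re ^ 2 + u.im ^ 2 = 1 := by
      have := congrArg Complex.re hu
      simp at this
      nlinarith
    have e2 := congrArg Complex.im e1
    rw [Complex.im_mul_ofReal] at e2
    rw [e2]
    simp [Complex.normSq_apply, pow_two]
    linear_combination (-(w.im * μ ^ 2)) * hu'
  have h2 : Complex.normSq (w - μ * u) ≠ 0 := by simpa using hwu
  rw [Complex.normSq_div]
  field_simp
  linarith

lemma cand_wC {n : ℕ} {β μ : ℝ} {w : ℂ} {ζ : Heis n}
    (hv : w + I * β ≠ 0) (hw : w ≠ 0) (hwu : w - μ * uDir β w ≠ 0)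
    (h : wC ζ * w = numN β w μ) : wC (cand β μ w ζ) = w := by
  have := normSq_alg (unit_mul_conj hv) hw hwu h
  apply Complex.ext
  · rw [wC_re]; rfl
  · rw [wC_im, cand, nsq_smul, ← wC_im ζ]; exact this

lemma cand_Phi {n : ℕ} {β μ l : ℝ} {w : ℂ} {ζ : Heis n} (hμ : 0 < μ) (hl : l ^ 2 = μ)
    (hv : w + I * β ≠ 0) (hw : w ≠ 0) (hwu : w - μ * uDir β w ≠ 0)
    (h : wC ζ * w = numN β w μ) : Phi (cand β μ w ζ) l β ζ = 0 := by
  have hC := cand_wC hv hw hwu h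
  have hu : uDir β w * (starRingEnd ℂ) (uDir β w) = 1 := unit_mul_conj hv
  set u := uDir β w with hudef
  set ξ := cand β μ w ζ with hξ
  set q := w / (w - μ * u) with hq
  have hq0 : q ≠ 0 := div_ne_zero hw hwu
  have hξk : ∀ k, ξ.1 k = q * ζ.1 k := fun k => rfl
  have hξ2 : ξ.2 = w.re := rfl
  have hμc : (μ : ℂ) ≠ 0 := by exact_mod_cast hμ.ne'
  have hcw : (starRingEnd ℂ) w ≠ 0 := by simpa using hw
  have hζk : ∀ k, ζ.1 k = (w - μ * u) / w * ξ.1 k := by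
    intro k; rw [hξk, hq]; field_simp
  have hinner : hermInner ζ.1 ξ.1 = (w - μ * u) / w * ((w.im : ℝ) : ℂ) := by
    have : hermInner ζ.1 ξ.1 = (w - μ * u) / w * hermInner ξ.1 ξ.1 := by
      simp only [hermInner, Finset.mul_sum]
      refine Finset.sum_congr rfl fun k _ => ?_
      rw [hζk k]; ring
    rw [this, hermInner_self, ← wC_im, hC]
  set a := hmul (hinv ξ) ζ with ha
  have hwa : wC a = -(μ : ℂ) ^ 2 / w := by
    rw [ha, wC_translate, hC, hinner]
    have h3 : 2 * I * ((w.im : ℝ) : ℂ) = w - (starRingEnd ℂ) w := by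
      rw [Complex.sub_conj]; push_cast; ring
    have h4 : 2 * I * ((w - μ * u) / w * ((w.im : ℝ) : ℂ))
        = (w - μ * u) / w * (w - (starRingEnd ℂ) w) := by
      rw [← h3]; ring
    rw [h4]
    have h5 : wC ζ = numN β w μ / w := by rw [eq_div_iff hw, h]
    rw [h5, numN, ← hudef]
    field_simp
    ring
  have ha1 : ∀ k, a.1 k = -(μ * u / w) * ξ.1 k := by
    intro k
    have : a.1 k = -ξ.1 k + ζ.1 k := rfl
    rw [this, hζk k]; field_simp; ring
  have hwi : wC (iota a) = (μ : ℂ) ^ 2 / (starRingEnd ℂ) w := by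
    have e : wC (iota a) = -(starRingEnd ℂ) (wC a) := by
      apply Complex.ext
      · simp [wC_re, iota]
      · simp [wC_im, iota, nsq]
    rw [e, hwa]; simp [neg_div]
  have ha2 : a.2 = -(μ ^ 2 * w.re / Complex.normSq w) := by
    rw [← wC_re, hwa, Complex.div_re, ← Complex.ofReal_pow, ← Complex.ofReal_neg]
    simp only [Complex.ofReal_re, Complex.ofReal_im]
    ring
  have hnw : Complex.normSq w ≠ 0 := by simpa using hw
  have hlc : ((l ^ 2 : ℝ) : ℂ) = μ := by rw [hl]
  have first : ∀ k, (rot (Mmat ξ β) (dil (l ^ 2) (crInv (iota a)))).1 k = -ξ.1 k := by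
    intro k
    simp only [rot, Mmat, Matrix.mulVec_diagonal, dil, crInv]
    rw [hwi, hlc]
    have : (iota a).1 k = (starRingEnd ℂ) (a.1 k) := rfl
    rw [this, ha1 k]
    by_cases hk : ξ.1 k = 0
    · simp [hk]
    · have hnk : (‖ξ.1 k‖ : ℂ) ≠ 0 := by simpa using hk
      have hexp : Complex.exp (I * ((theta ξ β k : ℝ) : ℂ))
          = (ξ.1 k / (‖ξ.1 k‖ : ℂ)) ^ 2 * u := by
        have g1 : Complex.exp ((ξ.1 k).arg * I) = ξ.1 k / (‖ξ.1 k‖ : ℂ) := by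
          rw [eq_div_iff hnk, mul_comm, Complex.norm_mul_exp_arg_mul_I]
        have g2 : Complex.exp ((w + I * β).arg * I) = u := by
          rw [hudef, uDir, eq_div_iff (by simpa using hv), mul_comm,
            Complex.norm_mul_exp_arg_mul_I]
        rw [← g1, ← g2, ← Complex.exp_nat_mul, ← Complex.exp_add, theta, if_pos hk, hC]
        congr 1
        push_cast; ring
      rw [hexp]
      have hs : ξ.1 k * (starRingEnd ℂ) (ξ.1 k) = (‖ξ.1 k‖ : ℂ) ^ 2 := by
        rw [Complex.mul_conj, Complex.normSq_eq_norm_sq]; push_cast; rfl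
      simp only [map_mul, map_neg, map_div₀, Complex.conj_ofReal]
      have : (ξ.1 k / (‖ξ.1 k‖ : ℂ)) ^ 2 * u *
          ((μ : ℂ) * (-((μ : ℂ) * (starRingEnd ℂ) u / (starRingEnd ℂ) w) * (starRingEnd ℂ) (ξ.1 k)
            / ((μ : ℂ) ^ 2 / (starRingEnd ℂ) w)))
          = -(ξ.1 k * (u * (starRingEnd ℂ) u) *
            (ξ.1 k * (starRingEnd ℂ) (ξ.1 k) / (‖ξ.1 k‖ : ℂ) ^ 2)) := by
        field_simp
      rw [this, hs, hu, div_self (pow_ne_zero 2 hnk)]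
      ring
  have second : (rot (Mmat ξ β) (dil (l ^ 2) (crInv (iota a)))).2 = -ξ.2 := by
    simp only [rot, dil, crInv]
    rw [hwi, hl, hξ2]
    have : (iota a).2 = -a.2 := rfl
    rw [this, ha2, Complex.normSq_div, Complex.normSq_conj, map_pow, Complex.normSq_ofReal]
    field_simp
  have key : rot (Mmat ξ β) (dil (l ^ 2) (crInv (iota a))) = (-ξ.1, -ξ.2) := by
    apply Prod.ext
    · funext k; exact first k
    · exact second
  have hz : hermInner ξ.1 (-ξ.1) = -((nsq ξ.1 : ℝ) : ℂ) := by
    rw [← hermInner_self]; simp [hermInner]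
  rw [Phi, ← ha, key, tau, hmul]
  apply Prod.ext
  · simp
  · simp [hz]

lemma lam_formula {n : ℕ} {ν : ℝ} (hν : 0 < ν)
    {f : Heis n → ℝ} (hcont : Continuous f) (hpos : ∀ p, 0 < f p)
    {α : ℝ}
    (hlim : Tendsto (fun ζ => korNorm ζ ^ ν * f ζ) (atInftyH n) (nhds α))
    {β : ℝ} {ξ : Heis n} {l : ℝ} (hl : 0 < l)
    (hsym : ∀ ζ : Heis n, ζ ≠ ξ → (l / dH ξ ζ) ^ ν * f (Phi ξ l β ζ) = f ζ) :
    l ^ 2 = (α / f ξ) ^ (2 / ν) := by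
  -- test points
  let p : ℝ → Heis n := fun k => (ξ.1, ξ.2 + k)
  have hself : (hermInner ξ.1 ξ.1).im = 0 := by rw [hermInner_self]; simp
  have hself' : (hermInner (-ξ.1) ξ.1).im = 0 := by
    have : hermInner (-ξ.1) ξ.1 = -hermInner ξ.1 ξ.1 := by simp [hermInner]
    rw [this]; simp [hself]
  have hd : ∀ k, 0 < k → dH ξ (p k) = k ^ ((1 : ℝ) / 2) := by
    intro k hk
    have : hmul (hinv (p k)) ξ = (0, -k) := by
      apply Prod.ext
      · simp [hmul, hinv, p]
      · simp [hmul, hinv, p, hself']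
    rw [dH, this, korNorm_eq]
    simp [wC, nsq, abs_of_pos hk]
  have hPhi : ∀ k, 0 < k → Phi ξ l β (p k) = (ξ.1, ξ.2 + l ^ 4 / k) := by
    intro k hk
    have h1 : hmul (hinv ξ) (p k) = (0, k) := by
      apply Prod.ext
      · simp [hmul, hinv, p]
      · simp [hmul, hinv, p, hself']
    have h2 : rot (Mmat ξ β) (dil (l ^ 2) (crInv (iota ((0, k) : Heis n)))) = (0, l ^ 4 / k) := by
      apply Prod.ext
      · funext j
        simp [rot, Mmat, dil, crInv, iota, Matrix.mulVec_diagonal]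
      · simp [rot, dil, crInv, iota, wC, nsq]
        field_simp
    rw [Phi, h1, h2, tau, hmul]
    simp [hermInner]
  have hkor : ∀ k, korNorm (p k) = ‖wC ξ + (k : ℂ)‖ ^ ((1 : ℝ) / 2) := by
    intro k
    rw [korNorm_eq]
    congr 2
    simp [wC, p]; ring
  have hnorm : Tendsto (fun k : ℝ => ‖wC ξ + (k : ℂ)‖) atTop atTop := by
    have h1 : Tendsto (fun k : ℝ => k - ‖wC ξ‖) atTop atTop :=
      tendsto_atTop_add_const_right _ _ tendsto_id
    refine tendsto_atTop_mono' _ ?_ h1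
    filter_upwards [eventually_gt_atTop 0] with k hk
    have := norm_sub_le_norm_add (k : ℂ) (wC ξ)
    rw [Complex.norm_real, Real.norm_of_nonneg hk.le, add_comm] at this
    exact this
  have hp : Tendsto p atTop (atInftyH n) := by
    rw [atInftyH, tendsto_comap_iff]
    have : korNorm ∘ p = fun k : ℝ => ‖wC ξ + (k : ℂ)‖ ^ ((1 : ℝ) / 2) := funext hkor
    rw [this]
    exact (tendsto_rpow_atTop (by norm_num)).comp hnorm
  have hA := hlim.comp hp
  have hinv0 : Tendsto (fun k : ℝ => k⁻¹) atTop (𝓝 0) := tendsto_inv_atTop_zero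
  have hratio : Tendsto (fun k : ℝ => ‖wC ξ * ((k⁻¹ : ℝ) : ℂ) + 1‖) atTop (𝓝 1) := by
    have hc : Continuous (fun x : ℝ => ‖wC ξ * (x : ℂ) + 1‖) := by fun_prop
    have := (hc.tendsto 0).comp hinv0
    simpa [Function.comp_def] using this
  have hB : Tendsto (fun k : ℝ => (‖wC ξ * ((k⁻¹ : ℝ) : ℂ) + 1‖ ^ ((1 : ℝ) / 2)) ^ ν * (l ^ ν *
      f (ξ.1, ξ.2 + l ^ 4 * k⁻¹))) atTop (𝓝 (((1 : ℝ) ^ ((1 : ℝ) / 2)) ^ ν * (l ^ ν * f ξ))) := by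
    refine Tendsto.mul ?_ (Tendsto.const_mul _ ?_)
    · exact (hratio.rpow_const (Or.inl one_ne_zero)).rpow_const (Or.inl (by simp))
    · have hc : Continuous (fun x : ℝ => f (ξ.1, ξ.2 + l ^ 4 * x)) := by fun_prop
      have := (hc.tendsto 0).comp hinv0
      simpa [Function.comp_def] using this
  have hEq : (fun k : ℝ => (‖wC ξ * ((k⁻¹ : ℝ) : ℂ) + 1‖ ^ ((1 : ℝ) / 2)) ^ ν * (l ^ ν *
      f (ξ.1, ξ.2 + l ^ 4 * k⁻¹))) =ᶠ[atTop] (fun ζ => korNorm ζ ^ ν * f ζ) ∘ p := by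
    filter_upwards [eventually_gt_atTop 0] with k hk
    have hne : p k ≠ ξ := by
      intro h
      have := congrArg Prod.snd h
      simp [p] at this
      exact hk.ne' this
    have hs := hsym (p k) hne
    simp only [Function.comp]
    rw [← hs, hd k hk, hPhi k hk, hkor k]
    have e : ‖wC ξ * ((k⁻¹ : ℝ) : ℂ) + 1‖ = ‖wC ξ + (k : ℂ)‖ / k := by
      have hkc : (k : ℂ) ≠ 0 := by exact_mod_cast hk.ne'
      have : wC ξ * ((k⁻¹ : ℝ) : ℂ) + 1 = (wC ξ + (k : ℂ)) / k := by
        push_cast; field_simp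
      rw [this, norm_div, Complex.norm_real, Real.norm_of_nonneg hk.le]
    rw [e, Real.div_rpow (norm_nonneg _) hk.le, Real.div_rpow (by positivity) (by positivity),
      Real.div_rpow hl.le (by positivity), div_eq_mul_inv (l ^ 4) k]
    ring
  have hlimeq := tendsto_nhds_unique (hB.congr' hEq) hA
  simp only [Real.one_rpow, one_mul] at hlimeq
  have h1 : α / f ξ = l ^ ν := by
    rw [← hlimeq]; field_simp [(hpos ξ).ne']
  rw [h1, ← Real.rpow_mul hl.le, mul_div_cancel₀ _ hν.ne', Real.rpow_two]

lemma small_nhds {n : ℕ} {s : Set (Heis n)} (hs : s ∈ 𝓝 (0 : Heis n)) :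
    ∃ r : ℝ, 0 < r ∧ ∀ ξ : Heis n, ‖wC ξ‖ ≤ r → ξ ∈ s := by
  obtain ⟨d, hd, hds⟩ := Metric.mem_nhds_iff.1 hs
  refine ⟨min (d / 2) ((d / 2) ^ 2), by positivity, fun ξ hξ => hds ?_⟩
  rw [mem_ball_zero_iff]
  have h1 : ‖ξ.2‖ ≤ d / 2 := by
    have := Complex.abs_re_le_norm (wC ξ)
    rw [wC_re] at this
    exact this.trans (hξ.trans (min_le_left _ _))
  have h2 : ‖ξ.1‖ ≤ d / 2 := by
    refine (pi_norm_le_iff_of_nonneg (by positivity)).2 fun k => ?_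
    have h3 := Complex.abs_im_le_norm (wC ξ)
    rw [wC_im] at h3
    have h4 : Complex.normSq (ξ.1 k) ≤ nsq ξ.1 :=
      Finset.single_le_sum (f := fun j => Complex.normSq (ξ.1 j))
        (fun _ _ => Complex.normSq_nonneg _) (Finset.mem_univ k)
    rw [Complex.normSq_eq_norm_sq] at h4
    have h5 : ‖ξ.1 k‖ ^ 2 ≤ (d / 2) ^ 2 :=
      h4.trans ((le_abs_self _).trans (h3.trans (hξ.trans (min_le_right _ _))))
    exact le_of_sq_le_sq h5 (by positivity)
  rw [Prod.norm_def]
  exact (max_le h2 h1).trans_lt (by linarith)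

/-- fixed-point lemma: far points are sent to the origin by
Φ_{ξ*,λ(ξ*)}^β with ξ* close to the origin. -/
theorem fixed_point_lemma (n : ℕ) (hn : 1 ≤ n) (ν : ℝ) (hν : 0 < ν)
    (f : Heis n → ℝ) (hcont : Continuous f) (hpos : ∀ p, 0 < f p)
    (hmax : ∀ p, f p ≤ f 0)
    (α : ℝ) (hα : 0 < α)
    (hlim : Tendsto (fun ζ => korNorm ζ ^ ν * f ζ) (atInftyH n) (nhds α))
    (β : ℝ) (hβ : β = α ^ (2 / ν) * f 0 ^ (-(2 / ν)))
    (lam : Heis n → ℝ) (hlam : ∀ ξ, 0 < lam ξ)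
    (hsym : ∀ ξ : Heis n, ∀ ζ : Heis n, ζ ≠ ξ →
      (lam ξ / dH ξ ζ) ^ ν * f (Phi ξ (lam ξ) β ζ) = f ζ) :
    ∀ ε : ℝ, 0 < ε → ∃ C : ℝ, 0 < C ∧ ∀ ζ : Heis n, C ≤ korNorm ζ →
      ∃ ξs : Heis n, Phi ξs (lam ξs) β ζ = 0 ∧ korNorm ξs ≤ ε := by
  intro ε hε
  have hf0 := hpos 0
  have hβpos : 0 < β := by rw [hβ]; positivity
  let g : Heis n → ℝ := fun ξ => (α / f ξ) ^ (2 / ν)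
  have hg : ∀ ξ, lam ξ ^ 2 = g ξ := fun ξ =>
    lam_formula hν hcont hpos hlim (hlam ξ) (hsym ξ)
  have hgc : Continuous g :=
    (continuous_const.div hcont fun p => (hpos p).ne').rpow_const
      fun p => Or.inl (div_pos hα (hpos p)).ne'
  have hg0 : g 0 = β := by
    rw [hβ]
    simp only [g]
    rw [Real.div_rpow hα.le hf0.le, Real.rpow_neg hf0.le, div_eq_mul_inv]
  have hgge : ∀ ξ, β ≤ g ξ := by
    intro ξ
    rw [← hg0]
    simp only [g]
    have := hpos ξ
    have := hmax ξ
    gcongr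
  have hnear : {ξ | g ξ < 2 * β} ∈ 𝓝 (0 : Heis n) :=
    (isOpen_lt hgc continuous_const).mem_nhds (by
      show g 0 < 2 * β
      rw [hg0]; linarith)
  obtain ⟨r₀, hr₀, hr₀'⟩ := small_nhds hnear
  set r := min (min r₀ (β / 2)) (ε ^ 2) with hrdef
  have hr : 0 < r := by positivity
  have hr1 : r ≤ r₀ := (min_le_left _ _).trans (min_le_left _ _)
  have hr2 : r ≤ β / 2 := (min_le_left _ _).trans (min_le_right _ _)
  have hr3 : r ≤ ε ^ 2 := min_le_right _ _
  set R := max (26 * β) (7 * β ^ 2 / r) with hR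
  have hRpos : 0 < R := lt_of_lt_of_le (by positivity) (le_max_left _ _)
  refine ⟨R ^ ((1 : ℝ) / 2), by positivity, fun ζ hζ => ?_⟩
  rw [korNorm_eq] at hζ
  have hW : R ≤ ‖wC ζ‖ :=
    (Real.rpow_le_rpow_iff hRpos.le (norm_nonneg _) (by norm_num)).1 hζ
  have hW1 : 26 * β ≤ ‖wC ζ‖ := (le_max_left _ _).trans hW
  have hW2 : 7 * β ^ 2 / r ≤ ‖wC ζ‖ := (le_max_right _ _).trans hW
  have hWne : wC ζ ≠ 0 := norm_pos_iff.1 (by linarith)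
  have hex : ∀ μ : ℝ, ∃ w : ℂ, μ ∈ Set.Icc β (2 * β) →
      ‖w‖ ≤ r ∧ numN β w μ / wC ζ = w := by
    intro μ
    by_cases h : μ ∈ Set.Icc β (2 * β)
    · obtain ⟨w, hw⟩ := exists_fix hβpos hr hr2 (hβpos.le.trans h.1) h.2 hW1 hW2
      exact ⟨w, fun _ => hw⟩
    · exact ⟨0, fun h' => absurd h' h⟩
  choose w hw using hex
  have hwcont : ContinuousOn w (Set.Icc β (2 * β)) := by
    have : LipschitzOnWith 1 w (Set.Icc β (2 * β)) := by
      refine LipschitzOnWith.of_dist_le_mul fun x hx y hy => ?_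
      rw [dist_eq_norm, Real.dist_eq, NNReal.coe_one, one_mul]
      exact fix_lip hβpos hr2 (hβpos.le.trans hx.1) hx.2 (hβpos.le.trans hy.1) hy.2 hW1
        (hw x hx).1 (hw y hy).1 (hw x hx).2 (hw y hy).2
    exact this.continuousOn
  have hv : ∀ μ ∈ Set.Icc β (2 * β), w μ + I * β ≠ 0 := fun μ hμ =>
    norm_pos_iff.1 (lt_of_lt_of_le (by positivity) (low_bound hβpos hr2 (hw μ hμ).1))
  have heq : ∀ μ ∈ Set.Icc β (2 * β), wC ζ * w μ = numN β (w μ) μ := by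
    intro μ hμ
    have := (hw μ hμ).2
    rw [div_eq_iff hWne] at this
    rw [this, mul_comm]
  have hw0 : ∀ μ ∈ Set.Icc β (2 * β), w μ ≠ 0 := by
    intro μ hμ h0
    have h1 := heq μ hμ
    rw [h0] at h1
    simp [numN] at h1
    linarith [hμ.1]
  have hwu : ∀ μ ∈ Set.Icc β (2 * β), w μ - μ * uDir β (w μ) ≠ 0 := by
    intro μ hμ h0
    have h1 := congrArg norm (sub_eq_zero.1 h0)
    have h2 : ‖uDir β (w μ)‖ = 1 := by
      rw [uDir, norm_div, Complex.norm_real, norm_norm,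
        div_self (norm_pos_iff.2 (hv μ hμ)).ne']
    rw [norm_mul, h2, Complex.norm_real, Real.norm_of_nonneg (hβpos.le.trans hμ.1)] at h1
    linarith [(hw μ hμ).1, hμ.1]
  have hucont : ContinuousOn (fun μ => uDir β (w μ)) (Set.Icc β (2 * β)) := by
    unfold uDir
    refine ContinuousOn.div (by fun_prop) (by fun_prop) ?_
    intro μ hμ
    simpa using hv μ hμ
  have hccont : ContinuousOn (fun μ => cand β μ (w μ) ζ) (Set.Icc β (2 * β)) := by
    unfold cand
    refine ContinuousOn.prodMk ?_ ?_
    · refine continuousOn_pi.2 fun k => ContinuousOn.mul ?_ continuousOn_const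
      refine ContinuousOn.div hwcont (hwcont.sub (ContinuousOn.mul ?_ hucont)) hwu
      exact Complex.continuous_ofReal.continuousOn
    · exact Complex.continuous_re.comp_continuousOn hwcont
  have hcw : ∀ μ ∈ Set.Icc β (2 * β), wC (cand β μ (w μ) ζ) = w μ := fun μ hμ =>
    cand_wC (hv μ hμ) (hw0 μ hμ) (hwu μ hμ) (heq μ hμ)
  have hle : β ≤ 2 * β := by linarith
  obtain ⟨μ, hμ, hfix⟩ := exists_mem_Icc_isFixedPt (f := fun μ => g (cand β μ (w μ) ζ))
    (hgc.comp_continuousOn hccont) hle (hgge _) (by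
      have hm : 2 * β ∈ Set.Icc β (2 * β) := ⟨hle, le_rfl⟩
      have : cand β (2 * β) (w (2 * β)) ζ ∈ {ξ | g ξ < 2 * β} := by
        apply hr₀'
        rw [hcw _ hm]
        exact (hw _ hm).1.trans hr1
      exact le_of_lt this)
  refine ⟨cand β μ (w μ) ζ, ?_, ?_⟩
  · refine cand_Phi (hβpos.trans_le hμ.1) ?_ (hv μ hμ) (hw0 μ hμ) (hwu μ hμ) (heq μ hμ)
    rw [hg]; exact hfix
  · rw [korNorm_eq, hcw μ hμ, ← Real.sqrt_eq_rpow]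
    exact Real.sqrt_le_iff.2 ⟨hε.le, (hw μ hμ).1.trans hr3⟩
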